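/- (Korn–Maxwell–Morrey) Let 3 < p < ∞ and set α = 1 − 3/p. Let 𝔸 be an elliptic first-order homogeneous operator on ℝ³ with matrix representative A. Then there exists c > 0 such that [F]_{C^{0,α}(ℝ³)} ≤ c([A[F]]_{C^{0,α}(ℝ³)} + ‖curl F‖_{Lᵖ(ℝ³)}) for all F ∈ C_c^∞(ℝ³; ℝ^{3×3}). -/

import Mathlib

open MeasureTheory
open scoped ENNReal

noncomputable def pd (j : Fin 3) (f : (Fin 3 → ℝ) → ℝ) (x : Fin 3 → ℝ) : ℝ :=
  fderiv ℝ f x (Pi.single j 1)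

/-- The row-wise curl of a matrix field `F : ℝ³ → ℝ^{3×3}`. -/
noncomputable def mcurl (F : (Fin 3 → ℝ) → Fin 3 → Fin 3 → ℝ) (x : Fin 3 → ℝ) :
    Fin 3 → Fin 3 → ℝ :=
  fun i => ![pd 1 (fun y => F y i 2) x - pd 2 (fun y => F y i 1) x,
             pd 2 (fun y => F y i 0) x - pd 0 (fun y => F y i 2) x,
             pd 0 (fun y => F y i 1) x - pd 1 (fun y => F y i 0) x]

/-- Ellipticity of the operator induced by `A`. -/
def IsElliptic {N : ℕ} (A : (Fin 3 → Fin 3 → ℝ) →ₗ[ℝ] (Fin N → ℝ)) : Prop :=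
  ∀ ξ : Fin 3 → ℝ, ξ ≠ 0 →
    Function.Injective (fun v : Fin 3 → ℝ => A (fun i j => v i * ξ j))

/-- The homogeneous `α`-Hölder seminorm `sup_{x ≠ y} |u(x) − u(y)|/|x−y|^α`. -/
noncomputable def holderSeminorm {E : Type*} [NormedAddCommGroup E] (α : ℝ)
    (u : (Fin 3 → ℝ) → E) : ℝ≥0∞ :=
  ⨆ (x : Fin 3 → ℝ) (y : Fin 3 → ℝ) (_ : x ≠ y),
    ENNReal.ofReal (‖u x - u y‖ / dist x y ^ α)

open scoped FourierTransform SchwartzMap LineDeriv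

abbrev R3 := Fin 3 → ℝ
abbrev E3 := EuclideanSpace ℝ (Fin 3)

/-- symbol of the row-wise curl -/
def cx {K : Type*} [Ring K] (ξ : Fin 3 → K) (X : Fin 3 → Fin 3 → K) : Fin 3 → Fin 3 → K :=
  fun i => ![ξ 1 * X i 2 - ξ 2 * X i 1, ξ 2 * X i 0 - ξ 0 * X i 2, ξ 0 * X i 1 - ξ 1 * X i 0]

def ebas {K : Type*} [Ring K] (r s : Fin 3) : Fin 3 → Fin 3 → K :=
  fun i j => if i = r ∧ j = s then 1 else 0

noncomputable def acoef {N : ℕ} (A : (Fin 3 → Fin 3 → ℝ) →ₗ[ℝ] (Fin N → ℝ)) (n : Fin N)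
    (r s : Fin 3) : ℝ := A (ebas r s) n

lemma A_eq {N : ℕ} (A : (Fin 3 → Fin 3 → ℝ) →ₗ[ℝ] (Fin N → ℝ)) (X : Fin 3 → Fin 3 → ℝ)
    (n : Fin N) : A X n = ∑ q : Fin 3 × Fin 3, acoef A n q.1 q.2 * X q.1 q.2 := by
  have : X = ∑ q : Fin 3 × Fin 3, X q.1 q.2 • (ebas q.1 q.2 : Fin 3 → Fin 3 → ℝ) := by
    ext i j
    simp only [Finset.sum_apply, Pi.smul_apply, ebas, smul_eq_mul]
    rw [Finset.sum_eq_single (i, j)]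
    · simp
    · rintro ⟨a, b⟩ _ h
      rw [if_neg]; · simp
      rintro ⟨rfl, rfl⟩; exact h rfl
    · simp
  conv_lhs => rw [this]
  simp [map_sum, acoef, mul_comm]

noncomputable def Smat {N : ℕ} (A : (Fin 3 → Fin 3 → ℝ) →ₗ[ℝ] (Fin N → ℝ)) (ξ : R3) :
    Matrix (Fin N ⊕ (Fin 3 × Fin 3)) (Fin 3 × Fin 3) ℝ :=
  Matrix.of fun a q => Sum.elim (fun n => acoef A n q.1 q.2)
    (fun k => cx ξ (ebas q.1 q.2) k.1 k.2) a

lemma cx_sum {K : Type*} [CommRing K] (ξ : Fin 3 → K) (X : Fin 3 → Fin 3 → K) (k l : Fin 3) :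
    ∑ q : Fin 3 × Fin 3, cx ξ (ebas q.1 q.2) k l * X q.1 q.2 = cx ξ X k l := by
  rw [Fintype.sum_prod_type]
  fin_cases k <;> fin_cases l <;> simp [cx, ebas, Fin.sum_univ_three] <;> ring

lemma Smat_inj {N : ℕ} (A : (Fin 3 → Fin 3 → ℝ) →ₗ[ℝ] (Fin N → ℝ)) (hA : IsElliptic A)
    (ξ : R3) (hξ : ξ ≠ 0) (v : Fin 3 × Fin 3 → ℝ) (hv : (Smat A ξ).mulVec v = 0) : v = 0 := by
  set X : Fin 3 → Fin 3 → ℝ := fun i j => v (i, j) with hX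
  have h1 : A X = 0 := by
    ext n
    have := congrFun hv (Sum.inl n)
    simpa [A_eq, Matrix.mulVec, dotProduct, Smat, hX] using this
  have h2 : ∀ k l, cx ξ X k l = 0 := by
    intro k l
    have := congrFun hv (Sum.inr (k, l))
    rw [← cx_sum]
    simpa [Matrix.mulVec, dotProduct, Smat, hX] using this
  set n2 : ℝ := ξ 0 ^ 2 + ξ 1 ^ 2 + ξ 2 ^ 2 with hn2
  have hn : n2 ≠ 0 := by
    intro h
    apply hξ
    ext i
    have h0 : ξ 0 = 0 := by nlinarith [sq_nonneg (ξ 0), sq_nonneg (ξ 1), sq_nonneg (ξ 2)]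
    have h1 : ξ 1 = 0 := by nlinarith [sq_nonneg (ξ 0), sq_nonneg (ξ 1), sq_nonneg (ξ 2)]
    have h2 : ξ 2 = 0 := by nlinarith [sq_nonneg (ξ 0), sq_nonneg (ξ 1), sq_nonneg (ξ 2)]
    fin_cases i <;> simp [h0, h1, h2]
  set w : Fin 3 → ℝ := fun i => (X i 0 * ξ 0 + X i 1 * ξ 1 + X i 2 * ξ 2) / n2 with hw
  have hXw : X = fun i j => w i * ξ j := by
    ext i j
    have a0 := h2 i 0
    have a1 := h2 i 1
    have a2 := h2 i 2
    simp [cx] at a0 a1 a2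
    have : X i j * n2 = (X i 0 * ξ 0 + X i 1 * ξ 1 + X i 2 * ξ 2) * ξ j := by
      rw [hn2]
      fin_cases j <;> simp
      · linear_combination ξ 2 * a1 - ξ 1 * a2
      · linear_combination ξ 0 * a2 - ξ 2 * a0
      · linear_combination ξ 1 * a0 - ξ 0 * a1
    simp only [hw]
    field_simp
    linarith
  have hw0 : w = 0 := by
    apply hA ξ hξ
    simp only [← hXw, h1]
    symm
    have : (fun i j => (0 : Fin 3 → ℝ) i * ξ j) = (0 : Fin 3 → Fin 3 → ℝ) := by ext; simp
    rw [this, map_zero]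
  ext ⟨i, j⟩
  have := congrFun (congrFun hXw i) j
  simpa [hw0, hX] using this

noncomputable def Lmat {N : ℕ} (A : (Fin 3 → Fin 3 → ℝ) →ₗ[ℝ] (Fin N → ℝ)) (ξ : R3) :
    Matrix (Fin 3 × Fin 3) (Fin N ⊕ (Fin 3 × Fin 3)) ℝ :=
  ((Smat A ξ).transpose * Smat A ξ)⁻¹ * (Smat A ξ).transpose

lemma det_ne {N : ℕ} (A : (Fin 3 → Fin 3 → ℝ) →ₗ[ℝ] (Fin N → ℝ)) (hA : IsElliptic A)
    (ξ : R3) (hξ : ξ ≠ 0) : ((Smat A ξ).transpose * Smat A ξ).det ≠ 0 := by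
  intro h
  obtain ⟨v, hv, hv2⟩ := Matrix.exists_mulVec_eq_zero_iff.mpr h
  apply hv
  apply Smat_inj A hA ξ hξ
  rw [← Matrix.conjTranspose_eq_transpose_of_trivial] at hv2
  exact (Matrix.conjTranspose_mul_self_mulVec_eq_zero _ _).1 hv2

lemma Lmat_mul {N : ℕ} (A : (Fin 3 → Fin 3 → ℝ) →ₗ[ℝ] (Fin N → ℝ)) (hA : IsElliptic A)
    (ξ : R3) (hξ : ξ ≠ 0) : Lmat A ξ * Smat A ξ = 1 := by
  rw [Lmat, Matrix.mul_assoc, Matrix.nonsing_inv_mul]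
  exact isUnit_iff_ne_zero.2 (det_ne A hA ξ hξ)

lemma Smat_contDiff {N : ℕ} (A : (Fin 3 → Fin 3 → ℝ) →ₗ[ℝ] (Fin N → ℝ)) (a q) :
    ContDiff ℝ (⊤ : ℕ∞) (fun ξ : R3 => Smat A ξ a q) := by
  rcases a with n | ⟨k, l⟩
  · simp [Smat]; fun_prop
  · simp only [Smat, Matrix.of_apply, Sum.elim_inr, cx]
    fin_cases l <;> simp <;> fun_prop

lemma det_contDiff {ι : Type*} [Fintype ι] [DecidableEq ι] (M : R3 → Matrix ι ι ℝ)
    (hM : ∀ i j, ContDiff ℝ (⊤ : ℕ∞) (fun ξ => M ξ i j)) :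
    ContDiff ℝ (⊤ : ℕ∞) (fun ξ => (M ξ).det) := by
  simp only [Matrix.det_apply]
  refine ContDiff.sum fun σ _ => ?_
  exact (contDiff_prod fun i _ => hM _ _).const_smul _

lemma Lmat_contDiff {N : ℕ} (A : (Fin 3 → Fin 3 → ℝ) →ₗ[ℝ] (Fin N → ℝ)) (hA : IsElliptic A)
    (q a) (ξ : R3) (hξ : ξ ≠ 0) :
    ContDiffAt ℝ (⊤ : ℕ∞) (fun ξ : R3 => Lmat A ξ q a) ξ := by
  have hP : ∀ i j, ContDiff ℝ (⊤ : ℕ∞)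
      (fun ξ : R3 => ((Smat A ξ).transpose * Smat A ξ) i j) := by
    intro i j
    simp only [Matrix.mul_apply, Matrix.transpose_apply]
    exact ContDiff.sum fun _ _ => (Smat_contDiff A _ _).mul (Smat_contDiff A _ _)
  simp only [Lmat, Matrix.mul_apply, Matrix.transpose_apply, Matrix.inv_def, Matrix.smul_apply,
    smul_eq_mul, Ring.inverse_eq_inv', Matrix.adjugate_apply]
  refine ContDiffAt.sum fun b _ => ContDiffAt.mul (ContDiffAt.mul ?_ ?_) ?_
  · refine ContDiffAt.inv ?_ (det_ne A hA ξ hξ)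
    exact (det_contDiff _ hP).contDiffAt
  · refine (det_contDiff _ ?_).contDiffAt
    intro i j
    simp only [Matrix.updateRow_apply]
    split_ifs
    · fun_prop
    · exact hP i j
  · exact (Smat_contDiff A _ _).contDiffAt

lemma symbol_identity {N : ℕ} (A : (Fin 3 → Fin 3 → ℝ) →ₗ[ℝ] (Fin N → ℝ)) (hA : IsElliptic A)
    (ξ : R3) (hξ : ξ ≠ 0) (X : Fin 3 → Fin 3 → ℂ) (i j : Fin 3) :
    X i j = ∑ n, (Lmat A ξ (i, j) (Sum.inl n) : ℂ) *
        (∑ q : Fin 3 × Fin 3, (acoef A n q.1 q.2 : ℂ) * X q.1 q.2) +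
      ∑ k : Fin 3 × Fin 3, (Lmat A ξ (i, j) (Sum.inr k) : ℂ) *
        cx (fun i => (ξ i : ℂ)) X k.1 k.2 := by
  have h := fun q => congrFun (congrFun (Lmat_mul A hA ξ hξ) (i, j)) q
  have e : ∀ k : Fin 3 × Fin 3, cx (fun i => (ξ i : ℂ)) X k.1 k.2 =
      ∑ q : Fin 3 × Fin 3, (Smat A ξ (Sum.inr k) q : ℂ) * X q.1 q.2 := by
    intro k
    rw [← cx_sum]
    refine Finset.sum_congr rfl fun q _ => ?_
    congr 1
    simp only [Smat, Matrix.of_apply, Sum.elim_inr, cx, ebas]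
    rcases k with ⟨k, l⟩
    fin_cases l <;> simp <;> split_ifs <;> simp
  have e2 : ∀ n, (∑ q : Fin 3 × Fin 3, (acoef A n q.1 q.2 : ℂ) * X q.1 q.2) =
      ∑ q : Fin 3 × Fin 3, (Smat A ξ (Sum.inl n) q : ℂ) * X q.1 q.2 := by
    intro n; simp [Smat]
  simp only [e, e2]
  rw [← Fintype.sum_sum_type (f := fun a => (Lmat A ξ (i, j) a : ℂ) *
     ∑ q : Fin 3 × Fin 3, (Smat A ξ a q : ℂ) * X q.1 q.2)]
  simp only [Finset.mul_sum]
  rw [Finset.sum_comm]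
  simp only [← mul_assoc, ← Finset.sum_mul]
  have : ∀ q : Fin 3 × Fin 3, (∑ a, (Lmat A ξ (i, j) a : ℂ) * (Smat A ξ a q : ℂ)) =
      if (i, j) = q then 1 else 0 := by
    intro q
    have := h q
    rw [Matrix.mul_apply, Matrix.one_apply] at this
    rw [← Complex.ofReal_one, ← Complex.ofReal_zero]
    have h3 := congrArg (fun x : ℝ => (x : ℂ)) this
    split_ifs at h3 ⊢ <;> simpa using h3
  simp [this]

noncomputable def eE : E3 ≃L[ℝ] R3 := PiLp.continuousLinearEquiv 2 ℝ (fun _ : Fin 3 => ℝ)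

noncomputable def upS (f : 𝓢(R3, ℂ)) : 𝓢(E3, ℂ) := SchwartzMap.compCLMOfContinuousLinearEquiv ℂ eE f

noncomputable def ker (g : 𝓢(E3, ℂ)) : 𝓢(R3, ℂ) :=
  SchwartzMap.compCLMOfContinuousLinearEquiv ℂ eE.symm (𝓕 g)

noncomputable def FR (f : 𝓢(R3, ℂ)) : 𝓢(E3, ℂ) := 𝓕 (upS f)

lemma upS_apply (f : 𝓢(R3, ℂ)) (x : E3) : upS f x = f (eE x) := rfl
lemma ker_apply (g : 𝓢(E3, ℂ)) (x : R3) : ker g x = 𝓕 g (eE.symm x) := rfl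

lemma int_eE {G : Type*} [NormedAddCommGroup G] [NormedSpace ℝ G] (f : R3 → G) :
    ∫ x : E3, f (eE x) = ∫ x, f x :=
  (PiLp.volume_preserving_ofLp (Fin 3)).integral_comp
    (MeasurableEquiv.toLp 2 (Fin 3 → ℝ)).symm.measurableEmbedding f

lemma pairing (f : 𝓢(R3, ℂ)) (g : 𝓢(E3, ℂ)) :
    ∫ x, f x * ker g x = ∫ ξ, FR f ξ * g ξ := by
  rw [FR, SchwartzMap.integral_fourier_mul_eq, ← int_eE]
  simp [ker_apply, upS_apply]

lemma integral_ker (g : 𝓢(E3, ℂ)) : ∫ x, ker g x = g 0 := by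
  rw [← int_eE]
  simp only [ker_apply, ContinuousLinearEquiv.symm_apply_apply]
  have : 𝓕⁻ (𝓕 g) = g := FourierTransform.fourierInv_fourier_eq g
  conv_rhs => rw [← this]
  rw [SchwartzMap.fourierInv_coe, Real.fourierInv_eq]
  simp

lemma FR_deriv (f : 𝓢(R3, ℂ)) (q : Fin 3) (ξ : E3) :
    FR (∂_{(Pi.single q 1 : R3)} f) ξ = (2 * Real.pi * Complex.I) * ((ξ q : ℂ) * FR f ξ) := by
  have h : upS (∂_{(Pi.single q 1 : R3)} f) = ∂_{(EuclideanSpace.single q 1 : E3)} (upS f) := by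
    ext x
    rw [upS_apply, SchwartzMap.lineDerivOp_apply_eq_fderiv, SchwartzMap.lineDerivOp_apply_eq_fderiv]
    have : (upS f : E3 → ℂ) = f ∘ eE := rfl
    rw [this, ContinuousLinearEquiv.comp_right_fderiv]
    rfl
  have hg : (inner ℝ · (EuclideanSpace.single q 1 : E3)).HasTemperateGrowth := by fun_prop
  rw [FR, h, SchwartzMap.fourier_lineDerivOp_eq]
  simp [hg, FR]
  left
  rw [EuclideanSpace.inner_single_right]
  simp

noncomputable def dil (t : ℝ) (ht : t ≠ 0) (g : 𝓢(E3, ℂ)) : 𝓢(E3, ℂ) :=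
  SchwartzMap.compCLMOfContinuousLinearEquiv ℂ
    (ContinuousLinearEquiv.smulLeft (Units.mk0 t ht)) g

lemma dil_apply (t : ℝ) (ht : t ≠ 0) (g : 𝓢(E3, ℂ)) (x : E3) : dil t ht g x = g (t • x) := rfl

lemma ker_dil (t : ℝ) (ht : 0 < t) (g : 𝓢(E3, ℂ)) (z : R3) :
    ker (dil t ht.ne' g) z = (t ^ 3)⁻¹ • ker g (t⁻¹ • z) := by
  rw [ker_apply, ker_apply, SchwartzMap.fourier_coe, SchwartzMap.fourier_coe,
    Real.fourier_eq, Real.fourier_eq]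
  have := Measure.integral_comp_smul_of_nonneg (volume : Measure E3)
    (fun v => Real.fourierChar (-inner ℝ v (eE.symm (t⁻¹ • z))) • g v) t (hR := ht.le)
  simp only [finrank_euclideanSpace, Fintype.card_fin] at this
  rw [← this]
  congr 1
  ext v
  rw [dil_apply, eE.symm.map_smul, inner_smul_left, inner_smul_right]
  simp [ht.ne']

lemma integral_ker_dil (t : ℝ) (ht : 0 < t) (g : 𝓢(E3, ℂ)) (f : R3 → ℂ) :
    ∫ z, f z * ker (dil t ht.ne' g) z = ∫ z, f (t • z) * ker g z := by
  have := Measure.integral_comp_smul_of_nonneg (volume : Measure R3)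
    (fun z => f z * ker g (t⁻¹ • z)) t (hR := ht.le)
  simp only [Module.finrank_fintype_fun_eq_card, Fintype.card_fin, smul_smul,
    inv_mul_cancel₀ ht.ne', one_smul] at this
  rw [this, ← integral_smul]
  congr 1; ext z
  rw [ker_dil t ht]
  simp; ring

lemma exists_mult {N : ℕ} (A : (Fin 3 → Fin 3 → ℝ) →ₗ[ℝ] (Fin N → ℝ)) (hA : IsElliptic A)
    (θ : 𝓢(E3, ℂ)) (hc : HasCompactSupport θ) (h0 : ∀ᶠ ξ in nhds (0 : E3), θ ξ = 0) (q a) :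
    ∃ g : 𝓢(E3, ℂ), ∀ ξ, g ξ = (Lmat A (eE ξ) q a : ℂ) * θ ξ := by
  have hs : ContDiff ℝ (⊤ : ℕ∞) (fun ξ : E3 => (Lmat A (eE ξ) q a : ℂ) * θ ξ) := by
    rw [contDiff_iff_contDiffAt]
    intro ξ
    by_cases hξ : ξ = 0
    · subst hξ
      have : (fun ξ : E3 => (Lmat A (eE ξ) q a : ℂ) * θ ξ) =ᶠ[nhds 0] fun _ => 0 := by
        filter_upwards [h0] with ξ h
        simp [h]
      exact contDiffAt_const.congr_of_eventuallyEq this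
    · refine ContDiffAt.mul ?_ (θ.smooth _).contDiffAt
      have h1 := Lmat_contDiff A hA q a (eE ξ) (by simpa using hξ)
      have h2 : ContDiffAt ℝ (⊤ : ℕ∞) (fun ξ : E3 => Lmat A (eE ξ) q a) ξ :=
        h1.comp ξ eE.contDiff.contDiffAt
      exact Complex.ofRealCLM.contDiff.contDiffAt.comp ξ h2
  exact ⟨HasCompactSupport.toSchwartzMap (f := fun ξ : E3 => (Lmat A (eE ξ) q a : ℂ) * θ ξ)
    hc.mul_left hs, fun ξ => rfl⟩

lemma FR_add (f g : 𝓢(R3, ℂ)) : FR (f + g) = FR f + FR g := by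
  simp only [FR, upS, map_add, FourierTransform.fourier_add]
lemma FR_smul (c : ℂ) (f : 𝓢(R3, ℂ)) : FR (c • f) = c • FR f := by
  simp only [FR, upS, map_smul, FourierTransform.fourier_smul]
lemma FR_sub (f g : 𝓢(R3, ℂ)) : FR (f - g) = FR f - FR g := by
  have h : f - g = f + (-1 : ℂ) • g := by rw [neg_one_smul, sub_eq_add_neg]
  rw [h, FR_add, FR_smul, neg_one_smul, ← sub_eq_add_neg]
lemma FR_sum {ι : Type*} (s : Finset ι) (f : ι → 𝓢(R3, ℂ)) :
    FR (∑ i ∈ s, f i) = ∑ i ∈ s, FR (f i) := by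
  classical
  induction s using Finset.induction_on with
  | empty =>
    have := FR_sub 0 0
    simpa using this
  | insert a s ha ih => rw [Finset.sum_insert ha, Finset.sum_insert ha, FR_add, ih]

/-- the curl of a Schwartz matrix field -/
noncomputable def scurl (f : Fin 3 → Fin 3 → 𝓢(R3, ℂ)) : Fin 3 → Fin 3 → 𝓢(R3, ℂ) :=
  fun i => ![∂_{(Pi.single 1 1 : R3)} (f i 2) - ∂_{(Pi.single 2 1 : R3)} (f i 1),
    ∂_{(Pi.single 2 1 : R3)} (f i 0) - ∂_{(Pi.single 0 1 : R3)} (f i 2),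
    ∂_{(Pi.single 0 1 : R3)} (f i 1) - ∂_{(Pi.single 1 1 : R3)} (f i 0)]

lemma FR_scurl (f : Fin 3 → Fin 3 → 𝓢(R3, ℂ)) (k l : Fin 3) (ξ : E3) :
    FR (scurl f k l) ξ = (2 * Real.pi * Complex.I) *
      cx (fun i => (ξ i : ℂ)) (fun i j => FR (f i j) ξ) k l := by
  fin_cases l <;> simp [scurl, cx, FR_sub, FR_deriv] <;> ring

lemma key_identity {N : ℕ} (A : (Fin 3 → Fin 3 → ℝ) →ₗ[ℝ] (Fin N → ℝ)) (hA : IsElliptic A)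
    (θ : 𝓢(E3, ℂ)) (h0 : θ 0 = 0) (i j : Fin 3)
    (g : Fin N ⊕ (Fin 3 × Fin 3) → 𝓢(E3, ℂ))
    (hg : ∀ a ξ, g a ξ = (Lmat A (eE ξ) (i, j) a : ℂ) * θ ξ)
    (f : Fin 3 → Fin 3 → 𝓢(R3, ℂ)) :
    ∫ x, f i j x * ker θ x =
      (∑ n, ∫ x, (∑ q : Fin 3 × Fin 3, (acoef A n q.1 q.2 : ℂ) • f q.1 q.2) x
        * ker (g (Sum.inl n)) x) +
      ∑ k : Fin 3 × Fin 3, (2 * Real.pi * Complex.I)⁻¹ *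
        ∫ x, scurl f k.1 k.2 x * ker (g (Sum.inr k)) x := by
  have hpi : (2 * Real.pi * Complex.I : ℂ) ≠ 0 := by simp [Real.pi_ne_zero]
  have hint : ∀ (a b : 𝓢(E3, ℂ)), Integrable (fun ξ => a ξ * b ξ) := by
    intro a b
    obtain ⟨C, -, hC⟩ := a.decay 0 0
    refine b.integrable.bdd_mul (c := C) a.continuous.aestronglyMeasurable (ae_of_all _ fun x => ?_)
    simpa using hC x
  simp only [pairing]
  simp only [← integral_const_mul]
  rw [← integral_finsetSum _ (fun n _ => hint _ _),
    ← integral_finsetSum _ (fun n _ => (hint _ _).const_mul _), ← integral_add]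
  · congr 1
    ext ξ
    by_cases hξ : ξ = 0
    · subst hξ
      simp [hg, h0]
    have hs := symbol_identity A hA (eE ξ) (by simpa using hξ) (fun i j => FR (f i j) ξ) i j
    rw [hs, add_mul, Finset.sum_mul, Finset.sum_mul]
    congr 1
    · refine Finset.sum_congr rfl fun n _ => ?_
      rw [hg, FR_sum, sum_apply]
      simp only [FR_smul, smul_apply, smul_eq_mul]
      ring
    · refine Finset.sum_congr rfl fun k _ => ?_
      rw [hg, FR_scurl]
      have : (fun i => ((eE ξ i : ℝ) : ℂ)) = fun i => (ξ i : ℂ) := rfl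
      rw [this]
      field_simp
  · exact integrable_finsetSum _ fun n _ => hint _ _
  · exact integrable_finsetSum _ fun n _ => (hint _ _).const_mul _

lemma pow_le_one_add {α : ℝ} (h0 : 0 < α) (h1 : α < 1) {r : ℝ} (hr : 0 ≤ r) : r ^ α ≤ 1 + r := by
  rcases le_total r 1 with h | h
  · have := Real.rpow_le_one hr h h0.le
    linarith
  · have := Real.rpow_le_rpow_of_exponent_le h h1.le
    rw [Real.rpow_one] at this
    linarith

lemma ker_int (K : 𝓢(R3, ℂ)) : Integrable (fun z => (1 + ‖z‖) * ‖K z‖) := by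
  have h1 := K.integrable_pow_mul volume 1
  have h2 := K.integrable_pow_mul volume 0
  refine (h2.add h1).congr (ae_of_all _ fun z => ?_)
  simp; ring

/-- If `u` is controlled by `r ‖z‖^α` then its pairing with a Schwartz kernel is controlled. -/
lemma holder_pair {α : ℝ} (h0 : 0 < α) (h1 : α < 1) (K : 𝓢(R3, ℂ)) (u : R3 → ℂ) (r : ℝ)
    (hr : 0 ≤ r) (hu : ∀ z, ‖u z‖ ≤ r * ‖z‖ ^ α) :
    ‖∫ z, u z * K z‖ ≤ r * ∫ z, (1 + ‖z‖) * ‖K z‖ := by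
  rw [← integral_const_mul]
  refine norm_integral_le_of_norm_le ((ker_int K).const_mul r) (ae_of_all _ fun z => ?_)
  rw [norm_mul, ← mul_assoc]
  gcongr
  exact (hu z).trans (by gcongr; exact pow_le_one_add h0 h1 (norm_nonneg z))

lemma lp_pair {p : ℝ} (hp : 1 < p) (K : 𝓢(R3, ℂ)) (u : 𝓢(R3, ℂ)) (b : ℝ) (hb : 0 ≤ b)
    (hu : eLpNorm u (ENNReal.ofReal p) volume ≤ ENNReal.ofReal b) :
    ‖∫ z, u z * K z‖ ≤ b * (eLpNorm K (ENNReal.ofReal (p / (p - 1))) volume).toReal := by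
  have hpq : p.HolderConjugate (p / (p - 1)) := Real.HolderConjugate.conjExponent hp
  have : ENNReal.HolderTriple (ENNReal.ofReal p) (ENNReal.ofReal (p / (p - 1))) 1 := by
    exact hpq.ennrealOfReal
  have h := eLpNorm_smul_le_mul_eLpNorm (p := ENNReal.ofReal p)
    (q := ENNReal.ofReal (p / (p - 1))) (r := 1) (μ := (volume : Measure R3))
    K.continuous.aestronglyMeasurable (φ := u) u.continuous.aestronglyMeasurable
  rw [eLpNorm_one_eq_lintegral_enorm] at h
  have h2 := (enorm_integral_le_lintegral_enorm (μ := volume) (fun z => u z * K z)).trans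
    (h.trans (mul_le_mul_left hu _))
  have hfin := (K.memLp (ENNReal.ofReal (p / (p - 1))) volume).eLpNorm_ne_top
  rw [← ofReal_norm, ← ENNReal.ofReal_toReal hfin, ← ENNReal.ofReal_mul hb] at h2
  exact (ENNReal.ofReal_le_ofReal_iff (by positivity)).1 h2

lemma entry_contDiff {F : R3 → Fin 3 → Fin 3 → ℝ} (hF : ContDiff ℝ (⊤ : ℕ∞) F) (i j : Fin 3) :
    ContDiff ℝ (⊤ : ℕ∞) (fun x => F x i j) :=
  contDiff_pi.1 (contDiff_pi.1 hF i) j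

lemma exists_schwartz {F : R3 → Fin 3 → Fin 3 → ℝ} (hF : ContDiff ℝ (⊤ : ℕ∞) F)
    (hc : HasCompactSupport F) :
    ∃ f : Fin 3 → Fin 3 → 𝓢(R3, ℂ), ∀ i j x, f i j x = (F x i j : ℂ) := by
  have h1 : ∀ i j, ContDiff ℝ (⊤ : ℕ∞) (fun x => (F x i j : ℂ)) := fun i j =>
    Complex.ofRealCLM.contDiff.comp (entry_contDiff hF i j)
  have h2 : ∀ i j, HasCompactSupport (fun x => (F x i j : ℂ)) := fun i j =>
    hc.comp_left (g := fun X : Fin 3 → Fin 3 → ℝ => (X i j : ℂ)) (by simp)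
  exact ⟨fun i j => (h2 i j).toSchwartzMap (h1 i j), fun i j x => rfl⟩

lemma scurl_apply {F : R3 → Fin 3 → Fin 3 → ℝ} (hF : ContDiff ℝ (⊤ : ℕ∞) F)
    (f : Fin 3 → Fin 3 → 𝓢(R3, ℂ)) (hf : ∀ i j x, f i j x = (F x i j : ℂ)) (k l : Fin 3) (x : R3) :
    scurl f k l x = (mcurl F x k l : ℂ) := by
  have hd : ∀ i j q, (∂_{(Pi.single q 1 : R3)} (f i j)) x = (pd q (fun y => F y i j) x : ℂ) := by
    intro i j q
    rw [SchwartzMap.lineDerivOp_apply_eq_fderiv]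
    have e : (f i j : R3 → ℂ) = fun y => (F y i j : ℂ) := funext (hf i j)
    have hdif : DifferentiableAt ℝ (fun y => F y i j) x :=
      (entry_contDiff hF i j).differentiable (by simp) x
    have := (Complex.ofRealCLM.hasFDerivAt.comp x hdif.hasFDerivAt).fderiv
    rw [e]
    have e2 : (fun y => (F y i j : ℂ)) = Complex.ofRealCLM ∘ fun y => F y i j := rfl
    rw [e2, this]
    simp [pd]
  fin_cases l <;> simp [scurl, mcurl, hd]

lemma key {N : ℕ} (A : (Fin 3 → Fin 3 → ℝ) →ₗ[ℝ] (Fin N → ℝ)) (hA : IsElliptic A)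
    {p α : ℝ} (hp : 1 < p) (hα0 : 0 < α) (hα1 : α < 1)
    (θ : 𝓢(E3, ℂ)) (hc : HasCompactSupport θ) (h0 : ∀ᶠ ξ in nhds (0 : E3), θ ξ = 0) :
    ∃ C : ℝ, 0 ≤ C ∧ ∀ F : R3 → Fin 3 → Fin 3 → ℝ, ContDiff ℝ (⊤ : ℕ∞) F → HasCompactSupport F →
      ∀ a b : ℝ, 0 ≤ a → 0 ≤ b → (∀ x y, ‖A (F x) - A (F y)‖ ≤ a * ‖x - y‖ ^ α) →
      eLpNorm (fun x => mcurl F x) (ENNReal.ofReal p) volume ≤ ENNReal.ofReal b →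
      ∀ i j, ‖∫ z, (F z i j : ℂ) * ker θ z‖ ≤ C * (a + b) := by
  choose g hg using fun (q : Fin 3 × Fin 3) a => exists_mult A hA θ hc h0 q a
  have hθ0 : θ 0 = 0 := h0.self_of_nhds
  set c1 : Fin 3 × Fin 3 → Fin N → ℝ := fun q n =>
    ∫ z, (1 + ‖z‖) * ‖ker (g q (Sum.inl n)) z‖ with hc1
  set c2 : Fin 3 × Fin 3 → Fin 3 × Fin 3 → ℝ := fun q k =>
    ‖(2 * Real.pi * Complex.I : ℂ)⁻¹‖ *
    (eLpNorm (ker (g q (Sum.inr k))) (ENNReal.ofReal (p / (p - 1))) volume).toReal with hc2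
  have hc1n : ∀ q n, 0 ≤ c1 q n := fun q n => integral_nonneg fun z => by positivity
  have hc2n : ∀ q n, 0 ≤ c2 q n := fun q n => by positivity
  refine ⟨∑ q, (∑ n, c1 q n + ∑ k, c2 q k), Finset.sum_nonneg fun q _ => add_nonneg
    (Finset.sum_nonneg fun n _ => hc1n q n) (Finset.sum_nonneg fun n _ => hc2n q n), ?_⟩
  intro F hF hcF a b ha hb hAF hcurl i j
  obtain ⟨f, hf⟩ := exists_schwartz hF hcF
  simp only [← hf]
  rw [key_identity A hA θ hθ0 i j (g (i, j)) (fun a ξ => hg _ _ _) f]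
  have b1 : ∀ n, ‖∫ x, (∑ q : Fin 3 × Fin 3, (acoef A n q.1 q.2 : ℂ) • f q.1 q.2) x
        * ker (g (i, j) (Sum.inl n)) x‖ ≤ a * c1 (i, j) n := by
    intro n
    have hk0 : ∫ z, ker (g (i, j) (Sum.inl n)) z = 0 := by
      rw [integral_ker, hg, hθ0, mul_zero]
    set u := ∑ q : Fin 3 × Fin 3, (acoef A n q.1 q.2 : ℂ) • f q.1 q.2 with hu
    have hux : ∀ x, u x = (A (F x) n : ℂ) := by
      intro x
      rw [hu, sum_apply, A_eq]
      push_cast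
      simp [hf]
    have e : ∫ x, u x * ker (g (i, j) (Sum.inl n)) x =
        ∫ x, (u x - u 0) * ker (g (i, j) (Sum.inl n)) x := by
      simp only [sub_mul]
      rw [integral_sub, integral_const_mul, hk0, mul_zero, sub_zero]
      · obtain ⟨C, -, hC⟩ := u.decay 0 0
        refine (ker (g (i, j) (Sum.inl n))).integrable.bdd_mul (c := C)
          u.continuous.aestronglyMeasurable (ae_of_all _ fun x => ?_)
        simpa using hC x
      · exact (ker (g (i, j) (Sum.inl n))).integrable.const_mul _
    rw [e]
    refine holder_pair hα0 hα1 _ _ a ha fun z => ?_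
    rw [hux, hux, ← Complex.ofReal_sub, Complex.norm_real]
    have h1 := norm_le_pi_norm (A (F z) - A (F 0)) n
    have h2 := hAF z 0
    rw [sub_zero] at h2
    exact h1.trans h2
  have b2 : ∀ k : Fin 3 × Fin 3, ‖(2 * Real.pi * Complex.I : ℂ)⁻¹ *
        ∫ x, scurl f k.1 k.2 x * ker (g (i, j) (Sum.inr k)) x‖ ≤ b * c2 (i, j) k := by
    intro k
    rw [norm_mul, hc2]
    have : eLpNorm (scurl f k.1 k.2) (ENNReal.ofReal p) volume ≤ ENNReal.ofReal b := by
      refine le_trans (eLpNorm_mono fun x => ?_) hcurl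
      rw [scurl_apply hF f hf, Complex.norm_real]
      exact (norm_le_pi_norm (mcurl F x k.1) k.2).trans (norm_le_pi_norm (mcurl F x) k.1)
    have := lp_pair hp (ker (g (i, j) (Sum.inr k))) (scurl f k.1 k.2) b hb this
    calc _ ≤ ‖(2 * Real.pi * Complex.I : ℂ)⁻¹‖ * _ := mul_le_mul_of_nonneg_left this (norm_nonneg _)
      _ = _ := by ring
  have s1 := Finset.sum_nonneg fun n (_ : n ∈ Finset.univ) => hc1n (i, j) n
  have s2 := Finset.sum_nonneg fun n (_ : n ∈ Finset.univ) => hc2n (i, j) n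
  calc _ ≤ ∑ n, a * c1 (i, j) n + ∑ k, b * c2 (i, j) k :=
        (norm_add_le _ _).trans (add_le_add
          ((norm_sum_le _ _).trans (Finset.sum_le_sum fun n _ => b1 n))
          ((norm_sum_le _ _).trans (Finset.sum_le_sum fun n _ => b2 n)))
    _ ≤ (∑ n, c1 (i, j) n + ∑ k, c2 (i, j) k) * (a + b) := by
        rw [← Finset.mul_sum, ← Finset.mul_sum]
        nlinarith
    _ ≤ _ := by
        refine mul_le_mul_of_nonneg_right ?_ (by positivity)
        exact Finset.single_le_sum (f := fun q => ∑ n, c1 q n + ∑ k, c2 q k)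
          (fun q _ => add_nonneg (Finset.sum_nonneg fun n _ => hc1n q n)
            (Finset.sum_nonneg fun n _ => hc2n q n)) (Finset.mem_univ (i, j))

lemma pd_affine {f : R3 → ℝ} (hf : Differentiable ℝ f) (x : R3) (l : ℝ) (q : Fin 3) (z : R3) :
    pd q (fun z => f (x + l • z)) z = l * pd q f (x + l • z) := by
  have h1 : HasFDerivAt (fun z : R3 => x + l • z) (l • ContinuousLinearMap.id ℝ R3) z :=
    ((hasFDerivAt_id z).const_smul l).const_add x
  have h2 := ((hf (x + l • z)).hasFDerivAt.comp z h1).fderiv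
  have e : (fun z => f (x + l • z)) = f ∘ fun z => x + l • z := rfl
  rw [pd, e, h2]
  simp [pd]

lemma mcurl_affine {F : R3 → Fin 3 → Fin 3 → ℝ} (hF : ContDiff ℝ (⊤ : ℕ∞) F) (x : R3) (l : ℝ)
    (z : R3) : mcurl (fun z => F (x + l • z)) z = l • mcurl F (x + l • z) := by
  have h : ∀ q i j, pd q (fun z => F (x + l • z) i j) z = l * pd q (fun y => F y i j) (x + l • z) :=
    fun q i j => pd_affine (f := fun y => F y i j)
      ((entry_contDiff hF i j).differentiable (by simp)) x l q z
  ext i j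
  fin_cases j <;> simp [mcurl, h, mul_sub]

lemma eLpNorm_affine {p : ℝ} (hp : 3 < p) {G : Type*} [NormedAddCommGroup G] [NormedSpace ℝ G]
    (u : R3 → G) (x : R3) (l : ℝ) (hl : 0 < l) :
    eLpNorm (fun z => l • u (x + l • z)) (ENNReal.ofReal p) volume =
      ENNReal.ofReal (l ^ (1 - 3 / p)) * eLpNorm u (ENNReal.ofReal p) volume := by
  have e1 : (fun z => l • u (x + l • z)) = l • (fun z => u (x + l • z)) := rfl
  rw [e1, eLpNorm_const_smul]
  have m1 : MeasurableEmbedding (fun z : R3 => l • z) :=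
    (Homeomorph.smulOfNeZero l hl.ne').measurableEmbedding
  have m2 : MeasurableEmbedding (fun z : R3 => x + z) := measurableEmbedding_addLeft x
  have h1 := m1.eLpNorm_map_measure (μ := volume) (p := ENNReal.ofReal p) (g := fun z => u (x + z))
  have h2 := m2.eLpNorm_map_measure (μ := volume) (p := ENNReal.ofReal p) (g := u)
  rw [Measure.map_addHaar_smul _ hl.ne', eLpNorm_smul_measure_of_ne_top (by simp)] at h1
  rw [map_add_left_eq_self] at h2
  have e2 : ((fun z => u (x + z)) ∘ fun z => l • z) = fun z => u (x + l • z) := rfl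
  have e3 : (u ∘ fun z => x + z) = fun z => u (x + z) := rfl
  rw [e2] at h1
  rw [e3] at h2
  rw [← h1, ← h2, smul_eq_mul, ← mul_assoc]
  congr 1
  have hp0 : 0 < p := by linarith
  rw [Real.enorm_eq_ofReal hl.le]
  simp only [Module.finrank_fintype_fun_eq_card, Fintype.card_fin]
  rw [abs_of_pos (by positivity), one_div, ENNReal.toReal_inv, ENNReal.toReal_ofReal hp0.le,
    ENNReal.ofReal_rpow_of_pos (by positivity), ← ENNReal.ofReal_mul hl.le]
  congr 1
  rw [Real.rpow_sub hl, Real.rpow_one, Real.inv_rpow (by positivity), ← Real.rpow_natCast,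
    ← Real.rpow_mul hl.le, div_eq_mul_inv]
  congr 2

lemma low_bound (φ : 𝓢(R3, ℂ)) : ∃ D : ℝ, 0 ≤ D ∧ ∀ h : R3, ‖h‖ ≤ 1 →
    ∫ z, (1 + ‖z‖) * ‖(φ - φ.compSubConstCLM ℂ h) z‖ ≤ D * ‖h‖ := by
  set C1 : ℝ := 2 ^ 5 * (Finset.Iic (5, 1)).sup (fun m => SchwartzMap.seminorm ℝ m.1 m.2) φ with hC1
  have hb : ∀ w, (1 + ‖w‖) ^ 5 * ‖fderiv ℝ φ w‖ ≤ C1 := by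
    intro w
    have := SchwartzMap.one_add_le_sup_seminorm_apply (𝕜 := ℝ) (m := (5, 1)) (k := 5) (n := 1)
      le_rfl le_rfl φ w
    rwa [norm_iteratedFDeriv_one] at this
  have hC1n : 0 ≤ C1 := le_trans (by positivity) (hb 0)
  have hI : Integrable (fun z : R3 => (1 + ‖z‖) ^ (-(4 : ℝ))) :=
    integrable_one_add_norm (by simp; norm_num)
  refine ⟨32 * C1 * ∫ z : R3, (1 + ‖z‖) ^ (-(4 : ℝ)), ?_, ?_⟩
  · exact mul_nonneg (by positivity) (integral_nonneg fun z => by positivity)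
  intro h hh
  have pt : ∀ z : R3, (1 + ‖z‖) * ‖(φ - φ.compSubConstCLM ℂ h) z‖ ≤
      (32 * C1 * ‖h‖) * (1 + ‖z‖) ^ (-(4 : ℝ)) := by
    intro z
    have hz : 0 < 1 + ‖z‖ := by positivity
    have hm := (convex_closedBall z 1).norm_image_sub_le_of_norm_fderiv_le (𝕜 := ℝ) (f := φ)
      (C := 32 * C1 / (1 + ‖z‖) ^ 5) (x := z - h) (y := z)
      (fun w _ => φ.differentiableAt) (fun w hw => ?_) (by simpa using hh) (by simp)
    · rw [sub_sub_cancel] at hm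
      have e : (φ - φ.compSubConstCLM ℂ h) z = φ z - φ (z - h) := rfl
      rw [e]
      calc _ ≤ (1 + ‖z‖) * (32 * C1 / (1 + ‖z‖) ^ 5 * ‖h‖) := by gcongr
        _ = _ := by
          rw [Real.rpow_neg hz.le]
          have : (1 + ‖z‖) ^ (4 : ℝ) = (1 + ‖z‖) ^ 4 := by norm_cast
          rw [this]
          field_simp
    · rw [le_div_iff₀ (by positivity)]
      have h1 : 1 + ‖z‖ ≤ 2 * (1 + ‖w‖) := by
        have : ‖z‖ ≤ ‖w‖ + ‖w - z‖ := by
          have := norm_sub_le w (w - z)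
          simpa using this
        have h2 : ‖w - z‖ ≤ 1 := by simpa [dist_eq_norm] using hw
        linarith [norm_nonneg w]
      calc ‖fderiv ℝ φ w‖ * (1 + ‖z‖) ^ 5 ≤ ‖fderiv ℝ φ w‖ * (2 * (1 + ‖w‖)) ^ 5 := by gcongr
        _ = 32 * ((1 + ‖w‖) ^ 5 * ‖fderiv ℝ φ w‖) := by ring
        _ ≤ _ := by gcongr; exact hb w
  calc _ ≤ ∫ z : R3, (32 * C1 * ‖h‖) * (1 + ‖z‖) ^ (-(4 : ℝ)) :=
        integral_mono (ker_int _) (hI.const_mul _) pt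
    _ = _ := by rw [integral_const_mul]; ring

lemma exists_bump : ∃ g : 𝓢(E3, ℂ), HasCompactSupport g ∧ ∀ᶠ ξ in nhds (0 : E3), g ξ = 1 := by
  let b : ContDiffBump (0 : E3) := ⟨1, 2, one_pos, by norm_num⟩
  have h1 : ContDiff ℝ (⊤ : ℕ∞) (fun x => (b x : ℂ)) := Complex.ofRealCLM.contDiff.comp b.contDiff
  have h2 : HasCompactSupport (fun x => (b x : ℂ)) :=
    b.hasCompactSupport.comp_left (g := fun x : ℝ => (x : ℂ)) (by simp)
  refine ⟨h2.toSchwartzMap h1, h2, ?_⟩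
  filter_upwards [b.eventuallyEq_one] with x hx
  simp [hx]

lemma F_bdd {F : R3 → Fin 3 → Fin 3 → ℝ} (hF : ContDiff ℝ (⊤ : ℕ∞) F)
    (hc : HasCompactSupport F) (i j : Fin 3) (K : 𝓢(R3, ℂ)) (x : R3) (t : ℝ) :
    Integrable (fun z => (F (x + t • z) i j : ℂ) * K z) := by
  obtain ⟨C, hC⟩ := hF.continuous.bounded_above_of_compact_support hc
  have hcont := (entry_contDiff hF i j).continuous
  refine K.integrable.bdd_mul (c := C) ?_ (ae_of_all _ fun z => ?_)
  · exact (Complex.continuous_ofReal.comp (hcont.comp (by fun_prop))).aestronglyMeasurable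
  · rw [Complex.norm_real]
    exact (norm_le_pi_norm (F (x + t • z) i) j).trans
      ((norm_le_pi_norm (F (x + t • z)) i).trans (hC _))

lemma affine_contDiff {F : R3 → Fin 3 → Fin 3 → ℝ} (hF : ContDiff ℝ (⊤ : ℕ∞) F) (x : R3) (l : ℝ) :
    ContDiff ℝ (⊤ : ℕ∞) (fun z => F (x + l • z)) :=
  hF.comp (by fun_prop)

lemma affine_compact {F : R3 → Fin 3 → Fin 3 → ℝ} (hc : HasCompactSupport F) (x : R3) (l : ℝ)
    (hl : 0 < l) : HasCompactSupport (fun z => F (x + l • z)) :=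
  hc.comp_homeomorph ((Homeomorph.smulOfNeZero l hl.ne').trans (Homeomorph.addLeft x))

/-- The estimate at one fixed scale. -/
lemma fixed_scale {N : ℕ} (A : (Fin 3 → Fin 3 → ℝ) →ₗ[ℝ] (Fin N → ℝ)) (hA : IsElliptic A)
    {p α : ℝ} (hp : 3 < p) (hα : α = 1 - 3 / p) (hα0 : 0 < α) (hα1 : α < 1) :
    ∃ δ C : ℝ, 0 < δ ∧ 0 ≤ C ∧ ∀ F : R3 → Fin 3 → Fin 3 → ℝ, ContDiff ℝ (⊤ : ℕ∞) F →
      HasCompactSupport F →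
      ∀ a b H : ℝ, 0 ≤ a → 0 ≤ b → 0 ≤ H → (∀ x y, ‖A (F x) - A (F y)‖ ≤ a * ‖x - y‖ ^ α) →
      eLpNorm (fun x => mcurl F x) (ENNReal.ofReal p) volume ≤ ENNReal.ofReal b →
      (∀ x y, ‖F x - F y‖ ≤ H * ‖x - y‖ ^ α) →
      ∀ h : R3, ‖h‖ = δ → ‖F 0 - F h‖ ≤ H / 2 * δ ^ α + C * (a + b) := by
  obtain ⟨g, hgc, hg1⟩ := exists_bump
  set φ := ker g with hφ
  obtain ⟨D, hD, hlow⟩ := low_bound φ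
  set c0 := ∫ z, (1 + ‖z‖) * ‖φ z‖ with hc0
  have hc0n : 0 ≤ c0 := integral_nonneg fun z => by positivity
  have hφ1 : ∫ z, φ z = 1 := by rw [hφ, integral_ker]; exact hg1.self_of_nhds
  -- choice of `δ`
  obtain ⟨δ, hδ0, hδ1, hδD⟩ : ∃ δ : ℝ, 0 < δ ∧ δ ≤ 1 ∧ D * δ ≤ δ ^ α / 4 := by
    have hb : 0 < 1 / (4 * (D + 1)) := by positivity
    have hb1 : 1 / (4 * (D + 1)) ≤ 1 := by
      rw [div_le_one (by positivity)]; linarith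
    have h1α : 0 < 1 - α := by linarith
    refine ⟨(1 / (4 * (D + 1))) ^ (1 / (1 - α)), by positivity,
      Real.rpow_le_one hb.le hb1 (by positivity), ?_⟩
    set δ := (1 / (4 * (D + 1))) ^ (1 / (1 - α)) with hδ
    have hδ0 : 0 < δ := by positivity
    have e : δ = δ ^ α * δ ^ (1 - α) := by
      rw [← Real.rpow_add hδ0]; simp
    have e2 : δ ^ (1 - α) = 1 / (4 * (D + 1)) := by
      rw [hδ, ← Real.rpow_mul hb.le, one_div_mul_cancel h1α.ne', Real.rpow_one]
    rw [e2] at e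
    have hpos : 0 < δ ^ α := by positivity
    calc D * δ = D * (δ ^ α * (1 / (4 * (D + 1)))) := by rw [← e]
      _ = (D / (D + 1)) * (δ ^ α / 4) := by field_simp
      _ ≤ 1 * (δ ^ α / 4) := by
        gcongr
        rw [div_le_one (by positivity)]; linarith
      _ = _ := one_mul _
  obtain ⟨t, ht, htc⟩ : ∃ t : ℝ, 0 < t ∧ t ^ α * c0 ≤ δ ^ α / 8 := by
    have hpos : 0 < δ ^ α := by positivity
    refine ⟨(δ ^ α / (8 * (c0 + 1))) ^ (1 / α), by positivity, ?_⟩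
    rw [← Real.rpow_mul (by positivity), one_div_mul_cancel hα0.ne', Real.rpow_one]
    calc δ ^ α / (8 * (c0 + 1)) * c0 = (c0 / (c0 + 1)) * (δ ^ α / 8) := by field_simp
      _ ≤ 1 * (δ ^ α / 8) := by
        gcongr
        rw [div_le_one (by positivity)]; linarith
      _ = _ := one_mul _
  set θ : 𝓢(E3, ℂ) := dil t ht.ne' g - g with hθ
  have hθc : HasCompactSupport θ := by
    have h1 : HasCompactSupport (dil t ht.ne' g) :=
      hgc.comp_homeomorph (Homeomorph.smulOfNeZero t ht.ne')
    exact h1.sub hgc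
  have hθ0 : ∀ᶠ ξ in nhds (0 : E3), θ ξ = 0 := by
    have h1 : Filter.Tendsto (fun ξ : E3 => t • ξ) (nhds 0) (nhds 0) := by
      have : Continuous fun ξ : E3 => t • ξ := by fun_prop
      simpa using this.tendsto 0
    filter_upwards [hg1, h1.eventually hg1] with ξ h1 h2
    have : θ ξ = g (t • ξ) - g ξ := rfl
    rw [this, h1, h2, sub_self]
  obtain ⟨C, hC, hkey⟩ := key A hA (p := p) (by linarith) hα0 hα1 θ hθc hθ0
  refine ⟨δ, 2 * C, hδ0, by positivity, ?_⟩
  intro F hF hcF a b H ha hb hH hAF hcurl hFH h hh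
  have hent : ∀ x y i j, ‖(F x i j : ℂ) - (F y i j : ℂ)‖ ≤ H * ‖x - y‖ ^ α := by
    intro x y i j
    rw [← Complex.ofReal_sub, Complex.norm_real]
    exact (norm_le_pi_norm ((F x - F y) i) j).trans
      ((norm_le_pi_norm (F x - F y) i).trans (hFH x y))
  have hnn : 0 ≤ H / 2 * δ ^ α + 2 * C * (a + b) := by positivity
  rw [pi_norm_le_iff_of_nonneg hnn]
  intro i
  rw [pi_norm_le_iff_of_nonneg hnn]
  intro j
  -- high frequencies
  have hhigh : ∀ x, ‖(F x i j : ℂ) - ∫ z, (F (x + t • z) i j : ℂ) * φ z‖ ≤ H * (δ ^ α / 8) := by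
    intro x
    have e : (F x i j : ℂ) - ∫ z, (F (x + t • z) i j : ℂ) * φ z =
        ∫ z, ((F x i j : ℂ) - (F (x + t • z) i j : ℂ)) * φ z := by
      simp only [sub_mul]
      rw [integral_sub (φ.integrable.const_mul _) (F_bdd hF hcF i j φ x t),
        integral_const_mul, hφ1, mul_one]
    rw [e]
    refine (holder_pair hα0 hα1 φ _ (H * t ^ α) (by positivity) fun z => ?_).trans ?_
    · refine (hent _ _ i j).trans (le_of_eq ?_)
      rw [sub_add_cancel_left, norm_neg, norm_smul, Real.norm_of_nonneg ht.le,
        Real.mul_rpow ht.le (norm_nonneg z), mul_assoc]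
    · rw [mul_assoc]
      gcongr
  -- middle frequencies
  have hmid : ∀ x, ‖(∫ z, (F (x + t • z) i j : ℂ) * φ z) - ∫ z, (F (x + z) i j : ℂ) * φ z‖
      ≤ C * (a + b) := by
    intro x
    have hk := hkey (fun z => F (x + (1 : ℝ) • z)) (affine_contDiff hF x 1)
      (affine_compact hcF x 1 one_pos) a b ha hb
      (fun y z => by simpa using hAF (x + (1 : ℝ) • y) (x + (1 : ℝ) • z)) (by
        have := eLpNorm_affine hp (mcurl F) x 1 one_pos
        simp only [mcurl_affine hF]
        rw [this]
        simpa using hcurl) i j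
    have e : ∀ z, ker θ z = ker (dil t ht.ne' g) z - ker g z := by
      intro z
      simp only [ker_apply]
      have e1 : θ = dil t ht.ne' g + (-1 : ℂ) • g := by
        rw [hθ, neg_one_smul, sub_eq_add_neg]
      rw [e1, FourierTransform.fourier_add, FourierTransform.fourier_smul, neg_one_smul,
        ← sub_eq_add_neg]
      rfl
    simp only [e, mul_sub] at hk
    rw [integral_sub (F_bdd hF hcF i j _ x 1) (F_bdd hF hcF i j _ x 1),
      integral_ker_dil t ht g (fun z => (F (x + (1 : ℝ) • z) i j : ℂ))] at hk
    simpa using hk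
  -- low frequencies
  have hlo : ‖(∫ z, (F (0 + z) i j : ℂ) * φ z) - ∫ z, (F (h + z) i j : ℂ) * φ z‖
      ≤ H * (δ ^ α / 4) := by
    set K := φ - φ.compSubConstCLM ℂ h with hK
    have hKz : ∀ z, K z = φ z - φ (z - h) := fun z => rfl
    have e1 : ∫ z, (F (h + z) i j : ℂ) * φ z = ∫ z, (F z i j : ℂ) * φ (z - h) := by
      rw [← integral_sub_right_eq_self (fun z => (F (h + z) i j : ℂ) * φ z) h]
      simp
    have iφ : Integrable (fun z => φ (z - h)) := (φ.compSubConstCLM ℂ h).integrable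
    have hK0 : ∫ z, K z = 0 := by
      simp only [hKz]
      rw [integral_sub φ.integrable iφ,
        integral_sub_right_eq_self (fun z => φ z) h, sub_self]
    have i1 : ∀ K : 𝓢(R3, ℂ), Integrable (fun z => (F z i j : ℂ) * K z) := fun K => by
      simpa using F_bdd hF hcF i j K 0 1
    have i2 : Integrable (fun z => (F z i j : ℂ) * φ (z - h)) := i1 (φ.compSubConstCLM ℂ h)
    have e2 : (∫ z, (F (0 + z) i j : ℂ) * φ z) - ∫ z, (F (h + z) i j : ℂ) * φ z =
        ∫ z, ((F z i j : ℂ) - (F 0 i j : ℂ)) * K z := by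
      simp only [sub_mul]
      rw [integral_sub (i1 K) (K.integrable.const_mul _), integral_const_mul, hK0, mul_zero,
        sub_zero, e1, ← integral_sub (by simpa using i1 φ) i2]
      simp only [hKz, mul_sub, zero_add]
    rw [e2]
    refine (holder_pair hα0 hα1 K _ H hH fun z => ?_).trans ?_
    · simpa using hent z 0 i j
    · gcongr
      refine (hlow h (by rw [hh]; exact hδ1)).trans ?_
      rw [hh]; exact hδD
  have e : ((F 0 i j : ℂ) - (F h i j : ℂ)) =
      ((F 0 i j : ℂ) - ∫ z, (F (0 + t • z) i j : ℂ) * φ z)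
      - ((F h i j : ℂ) - ∫ z, (F (h + t • z) i j : ℂ) * φ z)
      + ((∫ z, (F (0 + t • z) i j : ℂ) * φ z) - ∫ z, (F (0 + z) i j : ℂ) * φ z)
      - ((∫ z, (F (h + t • z) i j : ℂ) * φ z) - ∫ z, (F (h + z) i j : ℂ) * φ z)
      + ((∫ z, (F (0 + z) i j : ℂ) * φ z) - ∫ z, (F (h + z) i j : ℂ) * φ z) := by ring
  have e' : ‖(F 0 - F h) i j‖ = ‖((F 0 i j : ℂ) - (F h i j : ℂ))‖ := by
    rw [← Complex.ofReal_sub, Complex.norm_real]; rfl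
  rw [e', e]
  refine (norm_add_le _ _).trans ?_
  refine (add_le_add_left ((norm_sub_le _ _).trans
    (add_le_add_left ((norm_add_le _ _).trans
      (add_le_add_left (norm_sub_le _ _) _)) _)) _).trans ?_
  have := hhigh 0
  have := hhigh h
  have := hmid 0
  have := hmid h
  linarith

lemma improve {N : ℕ} (A : (Fin 3 → Fin 3 → ℝ) →ₗ[ℝ] (Fin N → ℝ)) (hA : IsElliptic A)
    {p α : ℝ} (hp : 3 < p) (hα : α = 1 - 3 / p) (hα0 : 0 < α) (hα1 : α < 1) :
    ∃ C : ℝ, 0 ≤ C ∧ ∀ F : R3 → Fin 3 → Fin 3 → ℝ, ContDiff ℝ (⊤ : ℕ∞) F →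
      HasCompactSupport F →
      ∀ a b H : ℝ, 0 ≤ a → 0 ≤ b → 0 ≤ H → (∀ x y, ‖A (F x) - A (F y)‖ ≤ a * ‖x - y‖ ^ α) →
      eLpNorm (fun x => mcurl F x) (ENNReal.ofReal p) volume ≤ ENNReal.ofReal b →
      (∀ x y, ‖F x - F y‖ ≤ H * ‖x - y‖ ^ α) →
      ∀ x y, ‖F x - F y‖ ≤ (H / 2 + C * (a + b)) * ‖x - y‖ ^ α := by
  obtain ⟨δ, C, hδ, hC, hfix⟩ := fixed_scale A hA hp hα hα0 hα1
  have hδα : 0 < δ ^ α := by positivity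
  refine ⟨C / δ ^ α, by positivity, ?_⟩
  intro F hF hcF a b H ha hb hH hAF hcurl hFH x y
  by_cases hxy : x = y
  · subst hxy
    simp [Real.zero_rpow hα0.ne']
  have hn : 0 < ‖y - x‖ := norm_pos_iff.2 (sub_ne_zero.2 (Ne.symm hxy))
  set l := ‖y - x‖ / δ with hl
  have hl0 : 0 < l := by positivity
  have hlα : 0 < l ^ α := by positivity
  have key := hfix (fun z => F (x + l • z)) (affine_contDiff hF x l) (affine_compact hcF x l hl0)
    (l ^ α * a) (l ^ α * b) (l ^ α * H) (by positivity) (by positivity) (by positivity)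
    (fun u v => by
      refine (hAF _ _).trans (le_of_eq ?_)
      rw [add_sub_add_left_eq_sub, ← smul_sub, norm_smul, Real.norm_of_nonneg hl0.le,
        Real.mul_rpow hl0.le (norm_nonneg _)]
      ring)
    (by
      simp only [mcurl_affine hF]
      rw [eLpNorm_affine hp (mcurl F) x l hl0, ← hα, ENNReal.ofReal_mul hlα.le]
      gcongr)
    (fun u v => by
      refine (hFH _ _).trans (le_of_eq ?_)
      rw [add_sub_add_left_eq_sub, ← smul_sub, norm_smul, Real.norm_of_nonneg hl0.le,
        Real.mul_rpow hl0.le (norm_nonneg _)]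
      ring)
    (l⁻¹ • (y - x)) (by
      rw [norm_smul, Real.norm_of_nonneg (by positivity), hl]
      field_simp)
  simp only [smul_zero, add_zero, smul_smul, mul_inv_cancel₀ hl0.ne', one_smul,
    add_sub_cancel] at key
  refine key.trans (le_of_eq ?_)
  have : ‖x - y‖ ^ α = l ^ α * δ ^ α := by
    rw [← Real.mul_rpow hl0.le hδ.le, hl, norm_sub_rev]
    congr 1
    field_simp
  rw [this]
  field_simp

lemma holder_le {E : Type*} [NormedAddCommGroup E] {α r : ℝ}
    (u : R3 → E) (h : ∀ x y, ‖u x - u y‖ ≤ r * ‖x - y‖ ^ α) :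
    holderSeminorm α u ≤ ENNReal.ofReal r := by
  refine iSup_le fun x => iSup_le fun y => iSup_le fun hxy => ?_
  refine ENNReal.ofReal_le_ofReal ?_
  have : 0 < dist x y := dist_pos.2 hxy
  rw [div_le_iff₀ (by positivity), dist_eq_norm]
  exact h x y

lemma le_holder {E : Type*} [NormedAddCommGroup E] {α : ℝ} (u : R3 → E)
    (hfin : holderSeminorm α u ≠ ⊤) (x y : R3) :
    ‖u x - u y‖ ≤ (holderSeminorm α u).toReal * ‖x - y‖ ^ α := by
  by_cases hxy : x = y
  · subst hxy; simp only [sub_self, norm_zero]; positivity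
  have : 0 < dist x y := dist_pos.2 hxy
  have h : ENNReal.ofReal (‖u x - u y‖ / dist x y ^ α) ≤ holderSeminorm α u :=
    le_iSup_of_le x (le_iSup_of_le y (le_iSup_of_le hxy le_rfl))
  rw [← ENNReal.ofReal_toReal hfin, ENNReal.ofReal_le_ofReal_iff (by positivity),
    div_le_iff₀ (by positivity), dist_eq_norm] at h
  exact h

lemma F_holder {F : R3 → Fin 3 → Fin 3 → ℝ} (hF : ContDiff ℝ (⊤ : ℕ∞) F)
    (hc : HasCompactSupport F) {α : ℝ} (hα0 : 0 < α) (hα1 : α < 1) :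
    holderSeminorm α F ≠ ⊤ := by
  obtain ⟨C, hC⟩ := hF.continuous.bounded_above_of_compact_support hc
  obtain ⟨K, hK⟩ := hF.lipschitzWith_of_hasCompactSupport hc (by simp)
  have hC0 : 0 ≤ C := (norm_nonneg _).trans (hC 0)
  refine ne_top_of_le_ne_top ENNReal.ofReal_ne_top
    (holder_le (r := K + 2 * C) F fun x y => ?_)
  have h1 : ‖F x - F y‖ ≤ K * ‖x - y‖ := by
    simpa [dist_eq_norm] using hK.dist_le_mul x y
  have h2 : ‖F x - F y‖ ≤ 2 * C := by
    have := norm_sub_le (F x) (F y)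
    linarith [hC x, hC y]
  have hK0 : (0 : ℝ) ≤ K := K.2
  rcases le_total ‖x - y‖ 1 with h | h
  · have h3 : ‖x - y‖ ≤ ‖x - y‖ ^ α := by
      rcases (norm_nonneg (x - y)).eq_or_lt with h0 | h0
      · rw [← h0, Real.zero_rpow hα0.ne']
      · simpa using Real.rpow_le_rpow_of_exponent_ge h0 h hα1.le
    nlinarith [norm_nonneg (x - y)]
  · have h3 : 1 ≤ ‖x - y‖ ^ α := Real.one_le_rpow h hα0.le
    nlinarith

/-- Korn–Maxwell–Morrey inequality: for `3 < p < ∞`, `α = 1 − 3/p`, and `A` inducing an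
elliptic operator, `[F]_{C^{0,α}} ≤ c([A[F]]_{C^{0,α}} + ‖curl F‖_{Lᵖ(ℝ³)})` for all
`F ∈ C_c^∞(ℝ³; ℝ^{3×3})`. -/
theorem korn_maxwell_morrey (p : ℝ) (hp : 3 < p) (N : ℕ)
    (A : (Fin 3 → Fin 3 → ℝ) →ₗ[ℝ] (Fin N → ℝ)) (hA : IsElliptic A) :
    ∃ c : ℝ, 0 < c ∧
      ∀ F : (Fin 3 → ℝ) → Fin 3 → Fin 3 → ℝ,
        ContDiff ℝ (⊤ : ℕ∞) F → HasCompactSupport F →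
          holderSeminorm (1 - 3 / p) F ≤
            ENNReal.ofReal c *
              (holderSeminorm (1 - 3 / p) (fun x => A (F x)) +
                eLpNorm (fun x => mcurl F x) (ENNReal.ofReal p) volume) := by
  have hp0 : 0 < p := by linarith
  have hα0 : 0 < 1 - 3 / p := by
    have : 3 / p < 1 := by rw [div_lt_one hp0]; exact hp
    linarith
  have hα1 : 1 - 3 / p < 1 := by
    have : 0 < 3 / p := by positivity
    linarith
  obtain ⟨C, hC, himp⟩ := improve A hA hp rfl hα0 hα1
  refine ⟨2 * C + 1, by positivity, ?_⟩
  intro F hF hcF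
  by_cases h1 : holderSeminorm (1 - 3 / p) (fun x => A (F x)) = ⊤
  · rw [h1, top_add, ENNReal.mul_top (by simp; positivity)]
    exact le_top
  by_cases h2 : eLpNorm (fun x => mcurl F x) (ENNReal.ofReal p) volume = ⊤
  · rw [h2, add_top, ENNReal.mul_top (by simp; positivity)]
    exact le_top
  have h3 := F_holder hF hcF hα0 hα1
  set a := (holderSeminorm (1 - 3 / p) (fun x => A (F x))).toReal with ha
  set b := (eLpNorm (fun x => mcurl F x) (ENNReal.ofReal p) volume).toReal with hb
  set H := (holderSeminorm (1 - 3 / p) F).toReal with hH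
  have ha0 : 0 ≤ a := ENNReal.toReal_nonneg
  have hb0 : 0 ≤ b := ENNReal.toReal_nonneg
  have hH0 : 0 ≤ H := ENNReal.toReal_nonneg
  have h := himp F hF hcF a b H ha0 hb0 hH0
    (le_holder (fun x => A (F x)) h1) (by rw [hb, ENNReal.ofReal_toReal h2]) (le_holder F h3)
  have h4 := holder_le F h
  rw [← ENNReal.ofReal_toReal h3, ENNReal.ofReal_le_ofReal_iff (by positivity), ← hH] at h4
  rw [← ENNReal.ofReal_toReal h3, ← ENNReal.ofReal_toReal h1, ← ENNReal.ofReal_toReal h2,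
    ← hH, ← ha, ← hb, ← ENNReal.ofReal_add ha0 hb0, ← ENNReal.ofReal_mul (by positivity)]
  refine ENNReal.ofReal_le_ofReal ?_
  nlinarith
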